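/- Let n ≥ 1 and let κ₀, κ₁, …, κ_{n−1} : ℝ → ℂ be continuous functions. Then there exist continuous functions λ₁, …, λₙ : ℝ → ℂ such that for every μ ∈ ℝ, the multiset {λ₁(μ), …, λₙ(μ)} is exactly the multiset of roots (with multiplicity) of the monic polynomial X^n + κ_{n−1}(μ)·X^{n−1} + ⋯ + κ₁(μ)·X + κ₀(μ) over ℂ. -/

import Mathlib

open Filter Topology

/-- Two finite families with the same multiset of values differ by a permutation of the indices. -/
theorem exists_perm_comp_eq_of_map_univ_eq {ι α : Type*} [Fintype ι] {v w : ι → α}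
    (h : Finset.univ.val.map v = Finset.univ.val.map w) :
    ∃ σ : Equiv.Perm ι, w ∘ σ = v := by
  classical
  have hcard (c : α) : Fintype.card {i // v i = c} = Fintype.card {i // w i = c} := by
    have hc := congrArg (Multiset.count c) h
    simp only [Multiset.count_map, eq_comm (a := c)] at hc
    rw [Fintype.card_subtype, Fintype.card_subtype]
    exact hc
  let e (c : α) : {i // v i = c} ≃ {i // w i = c} := Fintype.equivOfCardEq (hcard c)
  refine ⟨(Equiv.sigmaFiberEquiv v).symm.trans
    ((Equiv.sigmaCongrRight e).trans (Equiv.sigmaFiberEquiv w)), ?_⟩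
  funext i
  exact (e (v i) ⟨i, rfl⟩).2

/-- Along a discrete path with small jumps that stays close to `S`, being close to an isolated
point `p` of `S` is preserved. -/
theorem dist_lt_of_chain {E : Type*} [PseudoMetricSpace E] {S : Set E} {p : E} {ε : ℝ}
    (hp : ∀ q ∈ S, dist q p < 3 * ε → q = p) {u : ℕ → E} {a b : ℕ}
    (hS : ∀ k, a ≤ k → k ≤ b → ∃ q ∈ S, dist (u k) q < ε)
    (hu : ∀ k, a ≤ k → k < b → dist (u k) (u (k + 1)) < ε) {i j : ℕ}
    (hai : a ≤ i) (hib : i ≤ b) (haj : a ≤ j) (hjb : j ≤ b) (hi : dist (u i) p < ε) :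
    dist (u j) p < ε := by
  have close {k l : ℕ} (hl : a ≤ l) (hl' : l ≤ b) (hkl : dist (u l) (u k) < ε)
      (hk : dist (u k) p < ε) : dist (u l) p < ε := by
    obtain ⟨q, hq, hlq⟩ := hS l hl hl'
    have hqp : q = p := hp q hq <| by
      have h₁ := dist_triangle4 q (u l) (u k) p
      rw [dist_comm q (u l)] at h₁
      linarith
    rwa [← hqp]
  rcases le_total i j with hij | hji
  · induction j, hij using Nat.le_induction with
    | base => exact hi
    | succ k hk ih =>
      refine close haj hjb ?_ (ih (by lia) (by lia))
      rw [dist_comm]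
      exact hu k (by lia) (by lia)
  · induction i, hji using Nat.le_induction with
    | base => exact hi
    | succ k hk ih =>
      exact ih (by lia) (by lia) (close (by lia) (by lia) (hu k (by lia) (by lia)) hi)

/-- A Hausdorff-continuous multifunction on `ℝ` with nonempty finite values has a continuous
selection. -/
theorem exists_continuous_selection_of_finite {E : Type*} [MetricSpace E] (R : ℝ → Set E)
    (hfin : ∀ t, (R t).Finite) (hne : ∀ t, (R t).Nonempty)
    (hR : ∀ t, ∀ ε > 0, ∃ δ > 0, ∀ s ∈ Metric.ball t δ, ∀ s' ∈ Metric.ball t δ,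
      ∀ v ∈ R s, ∃ w ∈ R s', dist v w < ε) :
    ∃ f : ℝ → E, Continuous f ∧ ∀ t, f t ∈ R t := by
  choose step step_mem step_le using fun (t : ℝ) (v : E) =>
    Set.exists_min_image (R t) (dist v) (hfin t) (hne t)
  obtain ⟨v₀, -⟩ := hne 0
  let grid (N k : ℕ) : ℝ := -N + k / (N + 1)
  let u (N k : ℕ) : E :=
    Nat.rec (step (grid N 0) v₀) (fun k v => step (grid N (k + 1)) v) k
  have u_mem (N k : ℕ) : u N k ∈ R (grid N k) := by
    cases k <;> exact step_mem _ _
  let idx (N : ℕ) (t : ℝ) : ℕ := ⌊(t + N) * (N + 1)⌋₊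
  have grid_mono (N : ℕ) : Monotone (grid N) := fun k l hkl => by
    simp only [grid]
    gcongr
  have grid_le {N : ℕ} {t : ℝ} (ht : -N ≤ t) : grid N (idx N t) ≤ t := by
    have h : (idx N t : ℝ) ≤ (t + N) * (N + 1) :=
      Nat.floor_le (mul_nonneg (by linarith) (by positivity))
    have h' : (idx N t : ℝ) / (N + 1) ≤ t + N := (div_le_iff₀ (by positivity)).2 h
    simp only [grid]
    linarith
  have lt_grid (N : ℕ) (t : ℝ) : t - 1 / (N + 1) < grid N (idx N t) := by
    have h : (t + N) * (N + 1) < idx N t + 1 := Nat.lt_floor_add_one _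
    have h' : t + N < (idx N t + 1) / (N + 1) := (lt_div_iff₀ (by positivity)).2 h
    rw [add_div] at h'
    simp only [grid]
    linarith
  have ev_fine {δ : ℝ} (hδ : 0 < δ) : ∀ᶠ N : ℕ in hyperfilter ℕ, (1 : ℝ) / (N + 1) < δ :=
    Nat.hyperfilter_le_atTop
      (tendsto_one_div_add_atTop_nhds_zero_nat.eventually (gt_mem_nhds hδ))
  have ev_le (t : ℝ) : ∀ᶠ N : ℕ in hyperfilter ℕ, -(N : ℝ) ≤ t := by
    filter_upwards [Nat.hyperfilter_le_atTop
      (tendsto_natCast_atTop_atTop.eventually (eventually_ge_atTop (-t)))] with N hN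
    linarith
  have ev_near (t : ℝ) {ε : ℝ} (hε : 0 < ε) :
      ∀ᶠ N in hyperfilter ℕ, ∃ p ∈ R t, dist (u N (idx N t)) p < ε := by
    obtain ⟨δ, hδ, h⟩ := hR t ε hε
    filter_upwards [ev_fine hδ, ev_le t] with N hN hN'
    refine h _ ?_ t (Metric.mem_ball_self hδ) _ (u_mem _ _)
    rw [Metric.mem_ball, Real.dist_eq, abs_lt]
    constructor <;> linarith [lt_grid N t, grid_le hN']
  have exists_lim (t : ℝ) :
      ∃ p ∈ R t, Tendsto (fun N => u N (idx N t)) (hyperfilter ℕ) (𝓝 p) := by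
    have hw : ∀ᶠ N in hyperfilter ℕ, ∃ p ∈ R t, step t (u N (idx N t)) = p :=
      Eventually.of_forall fun N => ⟨_, step_mem _ _, rfl⟩
    obtain ⟨p, hp, hw⟩ := (Ultrafilter.eventually_exists_mem_iff (hfin t)).1 hw
    refine ⟨p, hp, Metric.tendsto_nhds.2 fun ε hε => ?_⟩
    filter_upwards [hw, ev_near t hε] with N hN hN'
    obtain ⟨q, hq, hlt⟩ := hN'
    rw [← hN]
    exact (step_le _ _ q hq).trans_lt hlt
  choose f f_mem f_lim using exists_lim
  refine ⟨f, continuous_iff_continuousAt.2 fun t => ?_, f_mem⟩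
  obtain ⟨g, hg, hiso⟩ : ∃ g > 0, ∀ q ∈ R t, dist q (f t) < g → q = f t := by
    have hclosed : IsClosed (R t \ {f t}) := ((hfin t).subset Set.sdiff_subset).isClosed
    obtain ⟨g, hg, hsub⟩ := Metric.isOpen_iff.1 hclosed.isOpen_compl (f t) (by simp)
    refine ⟨g, hg, fun q hq hlt => ?_⟩
    by_contra hne
    exact hsub (Metric.mem_ball.2 hlt) ⟨hq, hne⟩
  refine Metric.continuousAt_iff.2 fun η hη => ?_
  obtain ⟨ε, hε, hεη, hεg⟩ : ∃ ε > 0, ε < η ∧ 3 * ε ≤ g :=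
    ⟨min (η / 2) (g / 3), by positivity, (min_le_left _ _).trans_lt (by linarith),
      by linarith [min_le_right (η / 2) (g / 3)]⟩
  obtain ⟨δ, hδ, hmatch⟩ := hR t ε hε
  refine ⟨δ / 2, by positivity, fun {s} hs => ?_⟩
  refine lt_of_le_of_lt (le_of_tendsto ((f_lim s).dist tendsto_const_nhds) ?_) hεη
  filter_upwards [ev_fine (half_pos hδ), ev_le t, ev_le s,
    Metric.tendsto_nhds.1 (f_lim t) ε hε] with N hfine htN hsN hclose
  rw [Real.dist_eq, abs_lt] at hs
  have hball (k : ℕ) (hk : min (idx N s) (idx N t) ≤ k) (hk' : k ≤ max (idx N s) (idx N t)) :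
      grid N k ∈ Metric.ball t δ := by
    have h₁ := grid_mono N hk
    have h₂ := grid_mono N hk'
    have h₃ := lt_grid N s
    have h₄ := lt_grid N t
    have h₅ := grid_le hsN
    have h₆ := grid_le htN
    rw [Metric.mem_ball, Real.dist_eq, abs_lt]
    rw [(grid_mono N).map_min] at h₁
    rw [(grid_mono N).map_max] at h₂
    constructor
    · have : t - δ < min (grid N (idx N s)) (grid N (idx N t)) :=
        lt_min (by linarith) (by linarith)
      linarith
    · have : max (grid N (idx N s)) (grid N (idx N t)) < t + δ :=
        max_lt (by linarith) (by linarith)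
      linarith
  refine (dist_lt_of_chain (S := R t) (u := u N) (fun q hq hlt => hiso q hq (hlt.trans_le hεg))
    (fun k hk hk' => hmatch _ (hball k hk hk') t (Metric.mem_ball_self hδ) _ (u_mem N k))
    (fun k hk hk' => ?_) (min_le_right _ _) (le_max_right _ _) (min_le_left _ _)
    (le_max_left _ _) hclose).le
  obtain ⟨w, hw, hlt⟩ := hmatch _ (hball k hk hk'.le) _ (hball (k + 1) (by lia) hk') _ (u_mem N k)
  exact (step_le (grid N (k + 1)) (u N k) w hw).trans_lt hlt

open Polynomial in
/-- A tuple lists the roots of a monic polynomial of degree `n` iff the polynomial function is the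
product of the corresponding linear factors. -/
theorem map_univ_eq_roots_iff {n : ℕ} (c : Fin n → ℂ) (v : Fin n → ℂ) :
    Finset.univ.val.map v = (X ^ n + ∑ j : Fin n, C (c j) * X ^ (j : ℕ)).roots ↔
      ∀ z, ∏ i, (z - v i) = z ^ n + ∑ j : Fin n, c j * z ^ (j : ℕ) := by
  have hmonic : (X ^ n + ∑ j : Fin n, C (c j) * X ^ (j : ℕ)).Monic :=
    monic_X_pow_add (degree_sum_fin_lt c)
  have heval (z : ℂ) : (X ^ n + ∑ j : Fin n, C (c j) * X ^ (j : ℕ)).eval z =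
      z ^ n + ∑ j : Fin n, c j * z ^ (j : ℕ) := by
    simp [eval_finsetSum]
  constructor
  · intro h z
    have hprod := (IsAlgClosed.splits _).eq_prod_roots_of_monic hmonic
    rw [← heval, hprod, ← h, Multiset.map_map]
    exact (by simp [eval_prod] :
      ∏ i, (z - v i) = (∏ i, (X - C (v i))).eval z)
  · intro h
    have hprod : X ^ n + ∑ j : Fin n, C (c j) * X ^ (j : ℕ) = ∏ i, (X - C (v i)) :=
      Polynomial.funext fun z => by rw [heval, ← h]; simp [eval_prod]
    rw [hprod]
    have := roots_multiset_prod_X_sub_C (Finset.univ.val.map v)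
    rw [Multiset.map_map] at this
    exact this.symm

open Polynomial in
/-- The roots of a monic complex polynomial of degree `n` can be listed as an `n`-tuple. -/
theorem exists_map_univ_eq_roots {n : ℕ} (c : Fin n → ℂ) :
    ∃ v : Fin n → ℂ,
      Finset.univ.val.map v = (X ^ n + ∑ j : Fin n, C (c j) * X ^ (j : ℕ)).roots := by
  set p : ℂ[X] := X ^ n + ∑ j : Fin n, C (c j) * X ^ (j : ℕ) with hp
  have hcard : p.roots.toList.length = n := by
    rw [Multiset.length_toList, IsAlgClosed.card_roots_eq_natDegree]
    refine natDegree_eq_of_degree_eq_some ?_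
    rw [hp, degree_add_eq_left_of_degree_lt] <;> rw [degree_X_pow]
    exact degree_sum_fin_lt c
  refine ⟨fun i => p.roots.toList.get (i.cast hcard.symm), ?_⟩
  rw [Fin.univ_val_map]
  conv_rhs => rw [← Multiset.coe_toList p.roots]
  congr 1
  refine List.ext_get (by simp [hcard]) fun i h₁ h₂ => ?_
  simp

/-- A root of a monic polynomial is bounded by the coefficients. -/
theorem norm_le_of_pow_add_sum_eq_zero {n : ℕ} (c : Fin n → ℂ) {z : ℂ}
    (hz : z ^ n + ∑ j : Fin n, c j * z ^ (j : ℕ) = 0) : ‖z‖ ≤ 1 + ∑ j, ‖c j‖ := by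
  by_contra! hlt
  have hsum : 0 ≤ ∑ j, ‖c j‖ := by positivity
  have hone : 1 ≤ ‖z‖ := by linarith
  cases n with
  | zero => simp at hz
  | succ m =>
    have hle : ‖z‖ ^ (m + 1) ≤ (∑ j, ‖c j‖) * ‖z‖ ^ m := by
      rw [← norm_pow, eq_neg_of_add_eq_zero_left hz, norm_neg, Finset.sum_mul]
      refine norm_sum_le_of_le _ fun j _ => ?_
      rw [norm_mul, norm_pow]
      gcongr
      lia
    rw [pow_succ'] at hle
    have := le_of_mul_le_mul_right hle (by positivity)
    linarith

/-- Tuples satisfying the Vieta identity over nearby parameters agree up to a permutation and a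
small error. -/
theorem exists_perm_dist_lt {n : ℕ} {κ : Fin n → ℝ → ℂ} (hκ : ∀ j, Continuous (κ j)) (t : ℝ)
    {ε : ℝ} (hε : 0 < ε) :
    ∃ δ > 0, ∀ s ∈ Metric.ball t δ, ∀ s' ∈ Metric.ball t δ, ∀ v w : Fin n → ℂ,
      (∀ z, ∏ i, (z - v i) = z ^ n + ∑ j : Fin n, κ j s * z ^ (j : ℕ)) →
      (∀ z, ∏ i, (z - w i) = z ^ n + ∑ j : Fin n, κ j s' * z ^ (j : ℕ)) →
      ∃ σ : Equiv.Perm (Fin n), dist v (w ∘ σ) < ε := by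
  have exists_lim {s : ℕ → ℝ} {v : ℕ → Fin n → ℂ} (hs : Tendsto s (hyperfilter ℕ) (𝓝 t))
      (hv : ∀ k z, ∏ i, (z - v k i) = z ^ n + ∑ j : Fin n, κ j (s k) * z ^ (j : ℕ)) :
      ∃ p : Fin n → ℂ, Tendsto v (hyperfilter ℕ) (𝓝 p) ∧
        ∀ z, ∏ i, (z - p i) = z ^ n + ∑ j : Fin n, κ j t * z ^ (j : ℕ) := by
    have hbound : Continuous fun r => 1 + ∑ j, ‖κ j r‖ := by fun_prop
    have hmem : ∀ᶠ k in hyperfilter ℕ,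
        v k ∈ Metric.closedBall (0 : Fin n → ℂ) (1 + ∑ j, ‖κ j t‖ + 1) := by
      filter_upwards [((hbound.tendsto t).comp hs).eventually (gt_mem_nhds (lt_add_one _))]
        with k hk
      rw [mem_closedBall_zero_iff, pi_norm_le_iff_of_nonneg (by positivity)]
      intro i
      refine (norm_le_of_pow_add_sum_eq_zero (fun j => κ j (s k)) ?_).trans hk.le
      rw [← hv k]
      exact Finset.prod_eq_zero (Finset.mem_univ i) (sub_self _)
    obtain ⟨p, -, hp⟩ := (isCompact_closedBall (0 : Fin n → ℂ) _).ultrafilter_le_nhds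
      ((hyperfilter ℕ).map v) (le_principal_iff.2 hmem)
    have hp : Tendsto v (hyperfilter ℕ) (𝓝 p) := hp
    refine ⟨p, hp, fun z => ?_⟩
    have hl : Continuous fun x : Fin n → ℂ => ∏ i, (z - x i) := by fun_prop
    have hr : Continuous fun r => z ^ n + ∑ j : Fin n, κ j r * z ^ (j : ℕ) := by fun_prop
    refine tendsto_nhds_unique ((hl.tendsto p).comp hp) ?_
    exact ((hr.tendsto t).comp hs).congr fun k => (hv k z).symm
  by_contra! hcon
  choose s hs s' hs' v w hv hw hσ using fun k : ℕ =>
    hcon (1 / (k + 1)) Nat.one_div_pos_of_nat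
  have to_t {r : ℕ → ℝ} (hr : ∀ k : ℕ, r k ∈ Metric.ball t (1 / (k + 1))) :
      Tendsto r (hyperfilter ℕ) (𝓝 t) := by
    refine Tendsto.mono_left ?_ Nat.hyperfilter_le_atTop
    exact tendsto_iff_dist_tendsto_zero.2 (squeeze_zero (fun _ => dist_nonneg)
      (fun k => (Metric.mem_ball.1 (hr k)).le) tendsto_one_div_add_atTop_nhds_zero_nat)
  obtain ⟨p, hvp, hp⟩ := exists_lim (to_t hs) hv
  obtain ⟨q, hwq, hq⟩ := exists_lim (to_t hs') hw
  obtain ⟨σ, hpq⟩ := exists_perm_comp_eq_of_map_univ_eq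
    (((map_univ_eq_roots_iff (fun j => κ j t) p).2 hp).trans
      ((map_univ_eq_roots_iff (fun j => κ j t) q).2 hq).symm)
  have hcomp : Continuous fun x : Fin n → ℂ => x ∘ σ := by
    unfold Function.comp
    fun_prop
  have hlim := hvp.dist ((hcomp.tendsto q).comp hwq)
  rw [hpq, dist_self] at hlim
  obtain ⟨k, hk⟩ := (hlim.eventually (gt_mem_nhds hε)).exists
  exact (hσ k σ).not_gt hk

/-- The roots of a monic degree-`n` complex polynomial with coefficients depending
continuously on a real parameter can be parametrized by `n` continuous functions. -/
theorem stmt_7 (n : ℕ) (hn : 1 ≤ n) (κ : Fin n → ℝ → ℂ) (hκ : ∀ j, Continuous (κ j)) :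
    ∃ lam : Fin n → ℝ → ℂ, (∀ j, Continuous (lam j)) ∧
      ∀ μ : ℝ,
        (Finset.univ.val.map fun j : Fin n => lam j μ) =
          (Polynomial.X ^ n +
            ∑ j : Fin n, Polynomial.C (κ j μ) * Polynomial.X ^ (j : ℕ)).roots := by
  let R (t : ℝ) : Set (Fin n → ℂ) :=
    {v | ∀ z, ∏ i, (z - v i) = z ^ n + ∑ j : Fin n, κ j t * z ^ (j : ℕ)}
  have hne (t : ℝ) : (R t).Nonempty := by
    obtain ⟨v, hv⟩ := exists_map_univ_eq_roots fun j => κ j t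
    exact ⟨v, (map_univ_eq_roots_iff _ v).1 hv⟩
  have hfin (t : ℝ) : (R t).Finite := by
    obtain ⟨w, hw⟩ := hne t
    refine (Set.finite_range fun σ : Equiv.Perm (Fin n) => w ∘ σ).subset fun v hv => ?_
    exact exists_perm_comp_eq_of_map_univ_eq
      (((map_univ_eq_roots_iff (fun j => κ j t) v).2 hv).trans
        ((map_univ_eq_roots_iff (fun j => κ j t) w).2 hw).symm)
  obtain ⟨f, hf, hmem⟩ := exists_continuous_selection_of_finite R hfin hne fun t ε hε => by
    obtain ⟨δ, hδ, h⟩ := exists_perm_dist_lt hκ t hε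
    refine ⟨δ, hδ, fun s hs s' hs' v hv => ?_⟩
    obtain ⟨w, hw⟩ := hne s'
    obtain ⟨σ, hσ⟩ := h s hs s' hs' v w hv hw
    refine ⟨w ∘ σ, fun z => ?_, hσ⟩
    rw [← hw z]
    exact Equiv.prod_comp σ fun i => z - w i
  exact ⟨fun j t => f t j, fun j => (continuous_apply j).comp hf, fun t =>
    (map_univ_eq_roots_iff (fun j => κ j t) (f t)).2 (hmem t)⟩
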